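/- Let x, v ∈ ℝ² with ‖v‖ = 1, and let a finite nonempty family of lines be given by base points a_j ∈ ℝ² and unit direction vectors v_j ∈ ℝ² (j ranging over a finite index set), such that for every j the direction v_j is not parallel to v, i.e. cross(v, v_j) ≠ 0, where cross(u, w) = u₁w₂ − u₂w₁. Define the cost f(t) = Σ_j cross((x + t·v) − a_j, v_j)², which is the sum of squared Euclidean distances from the point x + t·v to each line {a_j + s·v_j : s ∈ ℝ}. Let t*_j = cross(a_j − x, v_j) / cross(v, v_j) denote the parameter at which the line t ↦ x + t·v meets the j-th line, and let w_j = cross(v, v_j)². Then f is a convex quadratic function of t whose unique global minimizer is t* = (Σ_j w_j · t*_j) / (Σ_j w_j). -/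

import Mathlib

open RealInnerProductSpace

/-- The 2D scalar cross product: `cross u w = u₁w₂ − u₂w₁`. -/
noncomputable def cross (u w : EuclideanSpace ℝ (Fin 2)) : ℝ := u 0 * w 1 - u 1 * w 0

/-!
Along `t ↦ x + t • v` each cross product is affine in `t`, say `b j * t - e j` with
`b j = cross v (vdir j)`, so the cost is a least-squares problem in one unknown. Since
`w j * tstar j = b j * e j`, the weighted average of the `tstar j` is the solution of its normal
equation, and completing the square there gives everything.
-/

theorem sum_mul_sub_sq_of_normal_equation {ι R : Type*} [CommRing R] (s : Finset ι)
    (b e : ι → R) {m : R} (hm : (∑ j ∈ s, b j ^ 2) * m = ∑ j ∈ s, b j * e j) (t : R) :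
    ∑ j ∈ s, (b j * t - e j) ^ 2 =
      (∑ j ∈ s, b j ^ 2) * (t - m) ^ 2 + ∑ j ∈ s, (b j * m - e j) ^ 2 := by
  have residual_orthogonal : ∑ j ∈ s, b j * (b j * m - e j) = 0 := by
    rw [← sub_eq_zero.mpr hm, Finset.sum_mul, ← Finset.sum_sub_distrib]
    exact Finset.sum_congr rfl fun j _ => by ring
  calc ∑ j ∈ s, (b j * t - e j) ^ 2
      = ∑ j ∈ s, (b j ^ 2 * (t - m) ^ 2 + 2 * (t - m) * (b j * (b j * m - e j))
          + (b j * m - e j) ^ 2) := Finset.sum_congr rfl fun j _ => by ring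
    _ = (∑ j ∈ s, b j ^ 2) * (t - m) ^ 2 + ∑ j ∈ s, (b j * m - e j) ^ 2 := by
      rw [Finset.sum_add_distrib, Finset.sum_add_distrib, ← Finset.sum_mul, ← Finset.mul_sum,
        residual_orthogonal, mul_zero, add_zero]

theorem convexOn_mul_sub_sq_add {𝕜 : Type*} [CommRing 𝕜] [LinearOrder 𝕜]
    [IsStrictOrderedRing 𝕜] {A : 𝕜} (hA : 0 ≤ A) (m c : 𝕜) :
    ConvexOn 𝕜 Set.univ fun t => A * (t - m) ^ 2 + c := by
  have shifted_sq : ConvexOn 𝕜 Set.univ fun t : 𝕜 => (t - m) ^ 2 := by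
    simpa only [sub_eq_add_neg, Function.comp_def, Set.preimage_univ] using
      even_two.convexOn_pow.translate_left (-m)
  exact (shifted_sq.smul hA).add_const c

theorem cross_add_smul_sub (x v a d : EuclideanSpace ℝ (Fin 2)) (t : ℝ) :
    cross (x + t • v - a) d = cross v d * t - cross (a - x) d := by
  simp only [cross, PiLp.add_apply, PiLp.sub_apply, PiLp.smul_apply, smul_eq_mul]
  ring

/-- A line parallel to `v` adds a constant to the cost and has weight `0`, so its `tstar` is left
free. -/
theorem prop1_weighted_average_minimizer_general
    {ι : Type*} [Fintype ι]
    (x v : EuclideanSpace ℝ (Fin 2))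
    (a vdir : ι → EuclideanSpace ℝ (Fin 2))
    (hnpar : ∃ j, cross v (vdir j) ≠ 0)
    (f : ℝ → ℝ)
    (hf : ∀ t, f t = ∑ j, (cross (x + t • v - a j) (vdir j)) ^ 2)
    (tstar : ι → ℝ)
    (htstar : ∀ j, cross v (vdir j) ≠ 0 →
      tstar j = cross (a j - x) (vdir j) / cross v (vdir j))
    (w : ι → ℝ) (hw : ∀ j, w j = (cross v (vdir j)) ^ 2)
    (tmin : ℝ) (htmin : tmin = (∑ j, w j * tstar j) / (∑ j, w j)) :
    (∃ A B C : ℝ, 0 < A ∧ ∀ t, f t = A * t ^ 2 + B * t + C) ∧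
    ConvexOn ℝ Set.univ f ∧
    (∀ t, f tmin ≤ f t) ∧
    (∀ t, f t = f tmin → t = tmin) := by
  obtain rfl : w = fun j => cross v (vdir j) ^ 2 := funext hw
  set W := ∑ j, cross v (vdir j) ^ 2
  have W_pos : 0 < W :=
    let ⟨j, hj⟩ := hnpar
    Finset.sum_pos' (fun _ _ => sq_nonneg _) ⟨j, Finset.mem_univ j, sq_pos_of_ne_zero hj⟩
  have weighted_tstar (j : ι) :
      cross v (vdir j) ^ 2 * tstar j = cross v (vdir j) * cross (a j - x) (vdir j) := by
    by_cases hj : cross v (vdir j) = 0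
    · simp [hj]
    · rw [htstar j hj]
      field_simp
  have normal_equation : W * tmin = ∑ j, cross v (vdir j) * cross (a j - x) (vdir j) := by
    rw [htmin, mul_div_cancel₀ _ W_pos.ne']
    exact Finset.sum_congr rfl fun j _ => weighted_tstar j
  have completed_square (t : ℝ) : f t = W * (t - tmin) ^ 2 + f tmin := by
    simp only [hf, cross_add_smul_sub]
    exact sum_mul_sub_sq_of_normal_equation _ _ _ normal_equation t
  refine ⟨⟨W, -2 * W * tmin, W * tmin ^ 2 + f tmin, W_pos, fun t => ?_⟩, ?_, fun t => ?_,
    fun t ht => ?_⟩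
  · rw [completed_square]
    ring
  · rw [funext completed_square]
    exact convexOn_mul_sub_sq_add W_pos.le tmin (f tmin)
  · rw [completed_square t]
    exact le_add_of_nonneg_left (by positivity)
  · rw [completed_square t, add_eq_right] at ht
    simpa only [mul_eq_zero, W_pos.ne', false_or, sq_eq_zero_iff, sub_eq_zero] using ht

/-- **Proposition 1.** For a target line `t ↦ x + t·v` (with `‖v‖ = 1`) and a finite nonempty
family of lines with base points `a j` and unit directions `vdir j`, none of which is parallel
to `v`, the total squared point-to-line distance
`f t = Σ_j cross((x + t·v) − a_j, v_j)²` is a convex quadratic function of `t` whose unique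
global minimizer is the weighted average `t* = (Σ_j w_j t*_j) / (Σ_j w_j)`, where
`t*_j = cross(a_j − x, v_j)/cross(v, v_j)` and `w_j = cross(v, v_j)²`. -/
theorem prop1_weighted_average_minimizer
    {ι : Type*} [Fintype ι] [Nonempty ι]
    (x v : EuclideanSpace ℝ (Fin 2)) (hv : ‖v‖ = 1)
    (a vdir : ι → EuclideanSpace ℝ (Fin 2))
    (hunit : ∀ j, ‖vdir j‖ = 1)
    (hnpar : ∀ j, cross v (vdir j) ≠ 0)
    (f : ℝ → ℝ)
    (hf : ∀ t, f t = ∑ j, (cross (x + t • v - a j) (vdir j)) ^ 2)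
    (tstar : ι → ℝ)
    (htstar : ∀ j, tstar j = cross (a j - x) (vdir j) / cross v (vdir j))
    (w : ι → ℝ) (hw : ∀ j, w j = (cross v (vdir j)) ^ 2)
    (tmin : ℝ) (htmin : tmin = (∑ j, w j * tstar j) / (∑ j, w j)) :
    (∃ A B C : ℝ, 0 < A ∧ ∀ t, f t = A * t ^ 2 + B * t + C) ∧
    ConvexOn ℝ Set.univ f ∧
    (∀ t, f tmin ≤ f t) ∧
    (∀ t, f t = f tmin → t = tmin) := by
  exact prop1_weighted_average_minimizer_general x v a vdir ⟨Classical.arbitrary ι, hnpar _⟩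
    f hf tstar (fun j _ => htstar j) w hw tmin htmin
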